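/- arXiv:2003.05189 — 2 statements merged into one kernel-verified Lean document; each statement's English description precedes it below -/
import Mathlib

section
/- Let (G, a) and (G', a') be attributed graphs with attributes in the same set Σ, let u be a vertex of G and u' a vertex of G', and suppose the set of exact matchings M(u, u') is nonempty. Then for every k ≥ 0: a_{k+1}(u) = a'_{k+1}(u') if and only if a(u) = a'(u') and there exists R ∈ M(u, u') such that a_k(v) = a'_k(v') for every (v, v') ∈ R. Equivalently, κ_subtree^{(k+1)}(u, u') = δ(a(u), a'(u')) · max_{R ∈ M(u,u')} Π_{(v,v') ∈ R} κ_subtree^{(k)}(v, v'). -/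
/-!
Since a label of depth `k` determines all labels of smaller depth, the history that a
Weisfeiler-Lehman label carries along is redundant: the label of `u` at depth `k + 1` amounts to
the attribute of `u` and the multiset of depth-`k` labels on its neighborhood. Two such multisets
agree exactly when the neighborhoods can be paired off bijectively with equal depth-`k` labels, and
such a pairing preserves attributes, so it is an exact matching.
-/

open Finset

/-- A walk of length `k` starting at `u`, encoded as a function `Fin (k+1) → V`
with consecutive vertices adjacent. -/
def walks {V : Type*} (G : SimpleGraph V) [Fintype V] [DecidableEq V]
    [DecidableRel G.Adj] (k : ℕ) (u : V) : Finset (Fin (k+1) → V) :=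
  Finset.univ.filter fun p => p 0 = u ∧ ∀ j : Fin k, G.Adj (p j.castSucc) (p j.succ)

open scoped Classical in
/-- The Dirac kernel. -/
noncomputable def dirac {α : Type*} (x y : α) : ℝ := if x = y then 1 else 0

/-- The walk kernel `κ_walk^{(k)}`. -/
noncomputable def walkKernel {V V' S : Type*} (G : SimpleGraph V) [Fintype V]
    [DecidableEq V] [DecidableRel G.Adj] (a : V → S)
    (G' : SimpleGraph V') [Fintype V'] [DecidableEq V'] [DecidableRel G'.Adj]
    (a' : V' → S) (k : ℕ) (u : V) (u' : V') : ℝ :=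
  ∑ p ∈ walks G k u, ∑ p' ∈ walks G' k u', dirac (a ∘ p) (a' ∘ p')

/-- The type of depth-`k` Weisfeiler-Lehman labels over an attribute set `S`. -/
def wlLabelType (S : Type u) : ℕ → Type u
  | 0 => S
  | k+1 => wlLabelType S k × Multiset (wlLabelType S k)

/-- The depth-`k` Weisfeiler-Lehman label of a vertex. -/
def wlLabel {V : Type*} {S : Type*} (G : SimpleGraph V) [Fintype V]
    [DecidableRel G.Adj] (a : V → S) : (k : ℕ) → V → wlLabelType S k
  | 0, u => a u
  | k+1, u => (wlLabel G a k u, (G.neighborFinset u).val.map (wlLabel G a k))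

/-- `R` is an exact matching of the neighborhoods of `u` and `u'`. -/
def ExactMatching {V V' S : Type*} (G : SimpleGraph V) [Fintype V]
    [DecidableRel G.Adj] (a : V → S)
    (G' : SimpleGraph V') [Fintype V'] [DecidableRel G'.Adj] (a' : V' → S)
    (u : V) (u' : V') (R : Finset (V × V')) : Prop :=
  (∀ e ∈ R, e.1 ∈ G.neighborFinset u ∧ e.2 ∈ G'.neighborFinset u') ∧
  R.card = (G.neighborFinset u).card ∧
  R.card = (G'.neighborFinset u').card ∧
  (∀ e ∈ R, ∀ f ∈ R, (e.1 = f.1 ↔ e.2 = f.2)) ∧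
  (∀ e ∈ R, a e.1 = a' e.2)

section Pairings

variable {α β : Type*}

theorem bijOn_coe_iff_mapsTo_injOn_card_eq {f : α → β} {s : Finset α} {t : Finset β} :
    Set.BijOn f s t ↔ Set.MapsTo f s t ∧ Set.InjOn f s ∧ s.card = t.card :=
  ⟨fun h => ⟨h.mapsTo, h.injOn, h.finsetCard_eq⟩, fun ⟨hmaps, hinj, hcard⟩ =>
    ⟨hmaps, hinj, surjOn_of_injOn_of_card_le f hmaps hinj hcard.ge⟩⟩

theorem map_val_eq_val_iff_bijOn {f : α → β} {s : Finset α} {t : Finset β} :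
    s.val.map f = t.val ↔ Set.BijOn f s t := by
  classical
  constructor
  · intro h
    have hinj : Set.InjOn f s := nodup_map_iff_injOn.1 (h ▸ t.nodup)
    have himage : s.image f = t := val_injective ((image_val_of_injOn hinj).trans h)
    rw [← himage, coe_image]
    exact hinj.bijOn_image
  · intro h
    have himage : s.image f = t := (image_eq_iff_bijOn_of_card h.finsetCard_eq.le).2 h
    rw [← image_val_of_injOn h.injOn, himage]

theorem rel_iff_exists_multiset_prod {r : α → β → Prop} {s : Multiset α} {t : Multiset β} :
    Multiset.Rel r s t ↔
      ∃ m : Multiset (α × β), m.map Prod.fst = s ∧ m.map Prod.snd = t ∧ ∀ e ∈ m, r e.1 e.2 := by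
  constructor
  · intro h
    induction h with
    | zero => exact ⟨0, by simp⟩
    | @cons x y _ _ hxy _ ih =>
      obtain ⟨m, rfl, rfl, hm⟩ := ih
      exact ⟨(x, y) ::ₘ m, by simp, by simp, Multiset.forall_mem_cons.2 ⟨hxy, hm⟩⟩
  · rintro ⟨m, rfl, rfl, hm⟩
    exact Multiset.rel_map.2 (Multiset.rel_refl_of_refl_on hm)

theorem rel_val_iff_exists_bijOn {r : α → β → Prop} {s : Finset α} {t : Finset β} :
    Multiset.Rel r s.val t.val ↔
      ∃ R : Finset (α × β), Set.BijOn Prod.fst (R : Set (α × β)) s ∧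
        Set.BijOn Prod.snd (R : Set (α × β)) t ∧ ∀ e ∈ R, r e.1 e.2 := by
  simp only [rel_iff_exists_multiset_prod, ← map_val_eq_val_iff_bijOn]
  constructor
  · rintro ⟨m, hfst, hsnd, hm⟩
    have hnodup : m.Nodup := Multiset.Nodup.of_map Prod.fst (hfst ▸ s.nodup)
    exact ⟨⟨m, hnodup⟩, hfst, hsnd, hm⟩
  · rintro ⟨R, hR⟩
    exact ⟨R.val, hR⟩

theorem map_val_eq_map_val_iff_exists_bijOn {γ : Type*} {f : α → γ} {g : β → γ} {s : Finset α}
    {t : Finset β} :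
    s.val.map f = t.val.map g ↔
      ∃ R : Finset (α × β), Set.BijOn Prod.fst (R : Set (α × β)) s ∧
        Set.BijOn Prod.snd (R : Set (α × β)) t ∧ ∀ e ∈ R, f e.1 = g e.2 := by
  rw [← Multiset.rel_eq, Multiset.rel_map, rel_val_iff_exists_bijOn]

theorem forall_fst_eq_iff_snd_eq_iff_injOn {R : Set (α × β)} :
    (∀ e ∈ R, ∀ f ∈ R, (e.1 = f.1 ↔ e.2 = f.2)) ↔ Set.InjOn Prod.fst R ∧ Set.InjOn Prod.snd R := by
  constructor
  · intro h
    exact ⟨fun e he f hf hef => Prod.ext hef ((h e he f hf).1 hef),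
      fun e he f hf hef => Prod.ext ((h e he f hf).2 hef) hef⟩
  · rintro ⟨hfst, hsnd⟩ e he f hf
    exact ⟨fun hef => congrArg Prod.snd (hfst he hf hef),
      fun hef => congrArg Prod.fst (hsnd he hf hef)⟩

end Pairings

section WeisfeilerLehman

variable {V V' S : Type*} {G : SimpleGraph V} [Fintype V] [DecidableRel G.Adj] {a : V → S}
  {G' : SimpleGraph V'} [Fintype V'] [DecidableRel G'.Adj] {a' : V' → S} {u : V} {u' : V'}

theorem exactMatching_iff_bijOn {R : Finset (V × V')} :
    ExactMatching G a G' a' u u' R ↔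
      Set.BijOn Prod.fst (R : Set (V × V')) (G.neighborFinset u) ∧
        Set.BijOn Prod.snd (R : Set (V × V')) (G'.neighborFinset u') ∧
        ∀ e ∈ R, a e.1 = a' e.2 := by
  have hinj := forall_fst_eq_iff_snd_eq_iff_injOn (R := (R : Set (V × V')))
  simp only [mem_coe] at hinj
  simp only [ExactMatching, hinj, bijOn_coe_iff_mapsTo_injOn_card_eq, forall_and, Set.MapsTo,
    mem_coe]
  tauto

theorem attribute_eq_of_wlLabel_eq {k : ℕ} (h : wlLabel G a k u = wlLabel G' a' k u') :
    a u = a' u' := by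
  induction k with
  | zero => exact h
  | succ k ih => exact ih (congrArg Prod.fst h)

theorem map_wlLabel_eq_of_map_wlLabel_succ_eq {s : Multiset V} {t : Multiset V'} {k : ℕ}
    (h : s.map (wlLabel G a (k + 1)) = t.map (wlLabel G' a' (k + 1))) :
    s.map (wlLabel G a k) = t.map (wlLabel G' a' k) := by
  rw [← Multiset.rel_eq, Multiset.rel_map] at h ⊢
  exact h.mono fun _ _ _ _ hsucc => congrArg Prod.fst hsucc

theorem wlLabel_succ_eq_iff_map_wlLabel_eq {k : ℕ} :
    wlLabel G a (k + 1) u = wlLabel G' a' (k + 1) u' ↔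
      a u = a' u' ∧
        (G.neighborFinset u).val.map (wlLabel G a k) =
          (G'.neighborFinset u').val.map (wlLabel G' a' k) := by
  constructor
  · intro h
    exact ⟨attribute_eq_of_wlLabel_eq h, congrArg Prod.snd h⟩
  · rintro ⟨hroot, hnbrs⟩
    induction k with
    | zero => exact Prod.ext hroot hnbrs
    | succ k ih => exact Prod.ext (ih (map_wlLabel_eq_of_map_wlLabel_succ_eq hnbrs)) hnbrs

theorem map_wlLabel_eq_iff_exists_exactMatching {k : ℕ} :
    (G.neighborFinset u).val.map (wlLabel G a k) =
        (G'.neighborFinset u').val.map (wlLabel G' a' k) ↔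
      ∃ R : Finset (V × V'), ExactMatching G a G' a' u u' R ∧
        ∀ e ∈ R, wlLabel G a k e.1 = wlLabel G' a' k e.2 := by
  rw [map_val_eq_map_val_iff_exists_bijOn]
  refine exists_congr fun R => ?_
  rw [exactMatching_iff_bijOn]
  constructor
  · rintro ⟨hfst, hsnd, hlabel⟩
    exact ⟨⟨hfst, hsnd, fun e he => attribute_eq_of_wlLabel_eq (hlabel e he)⟩, hlabel⟩
  · rintro ⟨⟨hfst, hsnd, -⟩, hlabel⟩
    exact ⟨hfst, hsnd, hlabel⟩

end WeisfeilerLehman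

theorem statement3_general {V V' S : Type*} (G : SimpleGraph V) [Fintype V] [DecidableRel G.Adj]
    (a : V → S) (G' : SimpleGraph V') [Fintype V'] [DecidableRel G'.Adj] (a' : V' → S)
    (u : V) (u' : V') (k : ℕ) :
    wlLabel G a (k + 1) u = wlLabel G' a' (k + 1) u' ↔
      a u = a' u' ∧
        ∃ R : Finset (V × V'), ExactMatching G a G' a' u u' R ∧
          ∀ e ∈ R, wlLabel G a k e.1 = wlLabel G' a' k e.2 := by
  rw [wlLabel_succ_eq_iff_map_wlLabel_eq, map_wlLabel_eq_iff_exists_exactMatching]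

/-- If `M(u,u')` is nonempty, then `a_{k+1}(u) = a'_{k+1}(u')` iff
`a(u) = a'(u')` and there exists an exact matching `R ∈ M(u,u')` such that
`a_k(v) = a'_k(v')` for every `(v,v') ∈ R`; equivalently
`κ_subtree^{(k+1)}(u,u') = δ(a(u),a'(u')) · max_{R ∈ M(u,u')} Π_{(v,v') ∈ R} κ_subtree^{(k)}(v,v')`. -/
theorem statement3 {V V' S : Type*} (G : SimpleGraph V) [Fintype V] [DecidableEq V]
    [DecidableRel G.Adj] (a : V → S)
    (G' : SimpleGraph V') [Fintype V'] [DecidableEq V'] [DecidableRel G'.Adj]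
    (a' : V' → S) (u : V) (u' : V')
    (hM : ∃ R : Finset (V × V'), ExactMatching G a G' a' u u' R) (k : ℕ) :
    wlLabel G a (k+1) u = wlLabel G' a' (k+1) u' ↔
      a u = a' u' ∧
        ∃ R : Finset (V × V'), ExactMatching G a G' a' u u' R ∧
          ∀ e ∈ R, wlLabel G a k e.1 = wlLabel G' a' k e.2 :=
  statement3_general G a G' a' u u' k
end

section
/- Let (G, a) and (G', a') be attributed graphs with attributes in the same set Σ, let k ≥ 0, and let u be a vertex of G and u' a vertex of G'. If a_k(u) = a'_k(u') (i.e., the depth-k WL subtree kernel distance between u and u' vanishes), then the multiset {{a(p) : p ∈ W_k(G, u)}} of attribute sequences of walks of length k from u equals the multiset {{a'(p') : p' ∈ W_k(G', u')}} of attribute sequences of walks of length k from u'; in particular κ_walk^{(k)}(u, u) − 2κ_walk^{(k)}(u, u') + κ_walk^{(k)}(u', u') = 0. -/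
/-!
The multiset of attribute sequences of the walks of length `k` from `u` is a function of the
depth-`k` WL label of `u` alone. Indeed, a walk of length `k + 1` from `u` is `u` followed by a walk
of length `k` from a neighbor of `u`, so its attribute sequence is `a(u)` prepended to one that, by
induction, can be read off the depth-`k` label of that neighbor; the depth-`k + 1` label of `u`
records both `a(u)` and the multiset of these neighbor labels. The walk kernel in turn depends only
on the two multisets of attribute sequences, so its three values coincide when the labels agree.
-/

open Finset

section Walks

variable {V S : Type*} (G : SimpleGraph V) [Fintype V] [DecidableEq V] [DecidableRel G.Adj]

variable {G} in
lemma mem_walks {k : ℕ} {u : V} {p : Fin (k + 1) → V} :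
    p ∈ walks G k u ↔ p 0 = u ∧ ∀ j : Fin k, G.Adj (p j.castSucc) (p j.succ) := by
  simp [walks]

lemma walks_zero (u : V) : walks G 0 u = {fun _ ↦ u} := by
  ext p
  simp [mem_walks, funext_iff]

variable {G} in
lemma cons_mem_walks_succ {k : ℕ} {u v : V} {p : Fin (k + 1) → V} :
    (Fin.cons v p : Fin (k + 2) → V) ∈ walks G (k + 1) u ↔
      v = u ∧ G.Adj v (p 0) ∧ p ∈ walks G k (p 0) := by
  simp [mem_walks, Fin.forall_fin_succ]

lemma pairwiseDisjoint_walks (k : ℕ) (s : Set V) : s.PairwiseDisjoint (walks G k) := by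
  intro v _ w _ hvw
  refine Finset.disjoint_left.2 fun p hpv hpw ↦ hvw ?_
  rw [← (mem_walks.1 hpv).1, (mem_walks.1 hpw).1]

lemma walks_succ (k : ℕ) (u : V) :
    walks G (k + 1) u =
      ((G.neighborFinset u).disjiUnion (walks G k) (pairwiseDisjoint_walks G k _)).map
        ⟨Fin.cons u, Fin.cons_right_injective (α := fun _ ↦ V) u⟩ := by
  ext p
  induction p using Fin.consCases with
  | cons v q =>
    simp only [cons_mem_walks_succ, Finset.mem_map, Finset.mem_disjiUnion,
      SimpleGraph.mem_neighborFinset, Function.Embedding.coeFn_mk]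
    constructor
    · rintro ⟨rfl, hadj, hq⟩
      exact ⟨q, ⟨q 0, hadj, hq⟩, rfl⟩
    · rintro ⟨q', ⟨w, hadj, hq'⟩, hcons⟩
      obtain ⟨rfl, rfl⟩ := Fin.cons_injective2 hcons
      obtain rfl := (mem_walks.1 hq').1
      exact ⟨rfl, hadj, hq'⟩

/-- The multiset `{{a(p) : p ∈ W_k(G, u)}}` of attribute sequences of the walks of length `k`
from `u`. -/
def walkAttrSeqs (a : V → S) (k : ℕ) (u : V) : Multiset (Fin (k + 1) → S) :=
  (walks G k u).val.map fun p ↦ a ∘ p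

lemma walkAttrSeqs_zero (a : V → S) (u : V) : walkAttrSeqs G a 0 u = {fun _ ↦ a u} := by
  rw [walkAttrSeqs, walks_zero]
  rfl

lemma walkAttrSeqs_succ (a : V → S) (k : ℕ) (u : V) :
    walkAttrSeqs G a (k + 1) u =
      ((G.neighborFinset u).val.bind (walkAttrSeqs G a k)).map (Fin.cons (a u)) := by
  simp only [walkAttrSeqs, walks_succ, Finset.map_val, Finset.disjiUnion_val,
    Function.Embedding.coeFn_mk, Multiset.map_bind, Multiset.map_map, Function.comp_apply,
    Fin.comp_cons]

lemma walkKernel_eq_sum_walkAttrSeqs (a : V → S) {V' : Type*} (G' : SimpleGraph V') [Fintype V']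
    [DecidableEq V'] [DecidableRel G'.Adj] (a' : V' → S) (k : ℕ) (u : V) (u' : V') :
    walkKernel G a G' a' k u u' =
      ((walkAttrSeqs G a k u).map fun s ↦
        ((walkAttrSeqs G' a' k u').map fun t ↦ dirac s t).sum).sum := by
  simp only [walkAttrSeqs, Multiset.map_map, Function.comp_apply]
  rfl

end Walks

section WLLabel

variable {V S : Type*}

/-- The attribute `a(u)` recorded in the depth-`k` WL label of a vertex `u`. -/
def wlRootAttr : (k : ℕ) → wlLabelType S k → S
  | 0, l => l
  | _ + 1, l => wlRootAttr _ l.1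

/-- The attribute sequences of the walks of length `k` from a vertex, decoded from its depth-`k`
WL label. -/
def wlAttrSeqs : (k : ℕ) → wlLabelType S k → Multiset (Fin (k + 1) → S)
  | 0, l => {fun _ ↦ l}
  | k + 1, l => (l.2.bind (wlAttrSeqs k)).map (Fin.cons (wlRootAttr k l.1))

lemma wlRootAttr_wlLabel (G : SimpleGraph V) [Fintype V] [DecidableRel G.Adj] (a : V → S)
    (k : ℕ) (u : V) : wlRootAttr k (wlLabel G a k u) = a u := by
  induction k with
  | zero => rfl
  | succ _ ih => exact ih

lemma wlAttrSeqs_wlLabel (G : SimpleGraph V) [Fintype V] [DecidableEq V] [DecidableRel G.Adj]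
    (a : V → S) (k : ℕ) (u : V) : wlAttrSeqs k (wlLabel G a k u) = walkAttrSeqs G a k u := by
  induction k generalizing u with
  | zero => exact (walkAttrSeqs_zero G a u).symm
  | succ k ih =>
    simp only [walkAttrSeqs_succ, wlAttrSeqs, wlLabel, wlRootAttr_wlLabel, Multiset.bind_map, ih]

end WLLabel

/-- If the depth-`k` WL labels of `u` and `u'` agree, then the
multisets of attribute sequences of walks of length `k` from `u` and from `u'`
coincide; in particular `κ_walk^{(k)}(u,u) − 2κ_walk^{(k)}(u,u') + κ_walk^{(k)}(u',u') = 0`. -/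
theorem statement5 {V V' S : Type*} (G : SimpleGraph V) [Fintype V] [DecidableEq V]
    [DecidableRel G.Adj] (a : V → S)
    (G' : SimpleGraph V') [Fintype V'] [DecidableEq V'] [DecidableRel G'.Adj]
    (a' : V' → S) (k : ℕ) (u : V) (u' : V')
    (h : wlLabel G a k u = wlLabel G' a' k u') :
    (walks G k u).val.map (fun p => a ∘ p) = (walks G' k u').val.map (fun p => a' ∘ p) ∧
    walkKernel G a G a k u u - 2 * walkKernel G a G' a' k u u'
        + walkKernel G' a' G' a' k u' u' = 0 := by
  have hseqs : walkAttrSeqs G a k u = walkAttrSeqs G' a' k u' := by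
    rw [← wlAttrSeqs_wlLabel, h, wlAttrSeqs_wlLabel]
  refine ⟨hseqs, ?_⟩
  simp only [walkKernel_eq_sum_walkAttrSeqs, hseqs]
  ring
end
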